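/- Let Φ be an irreducible crystallographic root system consisting of long and short roots, δ the ratio between long and short roots, and L' := span_ℤ({δα^∨ | α ∈ Φ_l} ∪ {α^∨ | α ∈ Φ_s}). Then L' is invariant under the Weyl group: w(λ) ∈ L' for all w ∈ W_Φ and all λ ∈ L'. -/

import Mathlib

open scoped RealInnerProductSpace

noncomputable section

variable {V : Type*} [NormedAddCommGroup V] [InnerProductSpace ℝ V]

/-- The coroot `α^∨ = 2α/(α|α)` of a vector `α`. -/
def coroot (α : V) : V := (2 / ⟪α, α⟫) • α

/-- The affine reflection `s_{α,k} : v ↦ v - ((v|α) - k)α^∨`, as a function. -/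
def sAffFun (α : V) (k : ℝ) (v : V) : V := v - (⟪v, α⟫ - k) • coroot α

theorem sAffFun_involutive (α : V) (k : ℝ) : Function.Involutive (sAffFun α k) := by
  intro v
  by_cases h : α = 0
  · simp [sAffFun, coroot, h]
  · have h2 : ⟪α, α⟫ ≠ 0 := by
      intro hz
      exact h (inner_self_eq_zero.mp hz)
    have hr : ⟪coroot α, α⟫ = 2 := by
      simp only [coroot, real_inner_smul_left]
      field_simp
    simp only [sAffFun, inner_sub_left, real_inner_smul_left, hr]
    have : ⟪v, α⟫ - (⟪v, α⟫ - k) * 2 - k = -(⟪v, α⟫ - k) := by ring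
    rw [this, neg_smul, sub_neg_eq_add, sub_add_cancel]

/-- The affine reflection `s_{α,k}` as a permutation of `V`. -/
def sAff (α : V) (k : ℝ) : Equiv.Perm V :=
  Function.Involutive.toPerm _ (sAffFun_involutive α k)

/-- The translation `Tr(x) : v ↦ v + x`, as a function. -/
def trFun (x : V) (v : V) : V := v + x

/-- The translation `Tr(x) : v ↦ v + x`, as a permutation of `V`. -/
def trPerm (x : V) : Equiv.Perm V := Equiv.addRight x

/-- A crystallographic (reduced) root system in a Euclidean space `V`. -/
structure IsCrystRootSystem (Φ : Set V) : Prop where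
  finite : Φ.Finite
  nonempty : Φ.Nonempty
  ne_zero : ∀ α ∈ Φ, α ≠ 0
  spanning : Submodule.span ℝ Φ = ⊤
  refl_mem : ∀ α ∈ Φ, ∀ β ∈ Φ, sAffFun α 0 β ∈ Φ
  reduced : ∀ α ∈ Φ, ∀ c : ℝ, c • α ∈ Φ → c = 1 ∨ c = -1
  cryst : ∀ α ∈ Φ, ∀ β ∈ Φ, ∃ n : ℤ, 2 * ⟪β, α⟫ / ⟪α, α⟫ = (n : ℝ)

/-- The (finite) Weyl group of `Φ`, generated by the reflections `s_α`. -/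
def WeylGroup (Φ : Set V) : Subgroup (Equiv.Perm V) :=
  Subgroup.closure {g | ∃ α ∈ Φ, g = sAff α 0}

/-- The affine Weyl group of `Φ`, generated by all affine reflections `s_{α,k}`, `k ∈ ℤ`. -/
def AffWeylGroup (Φ : Set V) : Subgroup (Equiv.Perm V) :=
  Subgroup.closure {g | ∃ α ∈ Φ, ∃ k : ℤ, g = sAff α k}

/-- The set of reflections of the affine Weyl group. -/
def AffReflections (Φ : Set V) : Set (Equiv.Perm V) :=
  {g | ∃ α ∈ Φ, ∃ k : ℤ, g = sAff α k}

/-- The coweight lattice `P(Φ^∨) = {x | (x|α) ∈ ℤ for all α ∈ Φ}`. -/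
def coweightLattice (Φ : Set V) : Set V :=
  {x | ∀ α ∈ Φ, ∃ n : ℤ, ⟪x, α⟫ = (n : ℝ)}

/-- `Φ` is irreducible: it admits no decomposition into two nonempty orthogonal parts. -/
def IsIrreducibleRS (Φ : Set V) : Prop :=
  ∀ Φ₁ Φ₂ : Set V, Φ₁ ∪ Φ₂ = Φ → (∀ α ∈ Φ₁, ∀ β ∈ Φ₂, ⟪α, β⟫ = 0) →
    Φ₁ = ∅ ∨ Φ₂ = ∅

/-! The reflections `s_α` are linear isometries that permute `Φ`, hence so are all elements of the
Weyl group. A linear isometry commutes with `α ↦ α^∨`, because that map only involves the inner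
product, and it preserves root lengths, so it permutes the generators of `L'`. -/

open Set
open scoped Pointwise

section Isometry

variable {V₂ : Type*} [NormedAddCommGroup V₂] [InnerProductSpace ℝ V₂]
  {Φ : Set V} {Ψ : Set V₂} {f : V →ₗᵢ[ℝ] V₂}

theorem map_coroot (f : V →ₗᵢ[ℝ] V₂) (α : V) : f (coroot α) = coroot (f α) := by
  rw [coroot, coroot, f.inner_map_map, map_smul]

theorem mapsTo_sep_inner_self (hf : MapsTo f Φ Ψ) (r : ℝ) :
    MapsTo f {γ ∈ Φ | ⟪γ, γ⟫ = r} {γ ∈ Ψ | ⟪γ, γ⟫ = r} :=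
  fun γ hγ ↦ ⟨hf hγ.1, (f.inner_map_map γ γ).trans hγ.2⟩

/-- The `ℤ`-span of the coroots of the elements of `Φ` of squared length `a` and of the `c`-fold
multiples of the coroots of the elements of squared length `b`. For a root system with short roots
of squared length `a` and long roots of squared length `b`, the lattice `L'` is the case
`c = δ = b / a`. -/
def rescaledCorootLattice (Φ : Set V) (a b c : ℝ) : Submodule ℤ V :=
  Submodule.span ℤ
    (((fun γ ↦ c • coroot γ) '' {γ ∈ Φ | ⟪γ, γ⟫ = b}) ∪
      (coroot '' {γ ∈ Φ | ⟪γ, γ⟫ = a}))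

theorem mapsTo_rescaledCorootLattice (hf : MapsTo f Φ Ψ) (a b c : ℝ) :
    MapsTo f (rescaledCorootLattice Φ a b c) (rescaledCorootLattice Ψ a b c) := by
  have short : MapsTo f (coroot '' {γ ∈ Φ | ⟪γ, γ⟫ = a}) (coroot '' {γ ∈ Ψ | ⟪γ, γ⟫ = a}) := by
    rintro _ ⟨γ, hγ, rfl⟩
    exact ⟨f γ, mapsTo_sep_inner_self hf a hγ, (map_coroot f γ).symm⟩
  have long : MapsTo f ((fun γ ↦ c • coroot γ) '' {γ ∈ Φ | ⟪γ, γ⟫ = b})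
      ((fun γ ↦ c • coroot γ) '' {γ ∈ Ψ | ⟪γ, γ⟫ = b}) := by
    rintro _ ⟨γ, hγ, rfl⟩
    exact ⟨f γ, mapsTo_sep_inner_self hf b hγ, by simp only [map_smul, map_coroot]⟩
  exact Submodule.mapsTo_span (f := f.toLinearMap.restrictScalars ℤ) (long.union_union short)

end Isometry

section WeylGroup

theorem sAff_zero_eq_reflection (α : V) : sAff α 0 = (ℝ ∙ α)ᗮ.reflection.toEquiv := by
  ext v
  change v - (⟪v, α⟫ - 0) • (2 / ⟪α, α⟫) • α = (ℝ ∙ α)ᗮ.reflection v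
  rw [Submodule.reflection_orthogonal_apply, Submodule.reflection_singleton_apply,
    real_inner_self_eq_norm_sq, real_inner_comm]
  simp only [RCLike.ofReal_real_eq_id, id]
  module

variable {Φ : Set V} {w : Equiv.Perm V}

theorem exists_linearIsometryEquiv_of_mem_weylGroup (hw : w ∈ WeylGroup Φ) :
    ∃ f : V ≃ₗᵢ[ℝ] V, f.toEquiv = w := by
  induction hw using Subgroup.closure_induction with
  | mem _ hg =>
    obtain ⟨α, -, rfl⟩ := hg
    exact ⟨(ℝ ∙ α)ᗮ.reflection, (sAff_zero_eq_reflection α).symm⟩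
  | one => exact ⟨1, rfl⟩
  | mul _ _ _ _ hf hg =>
    obtain ⟨f, rfl⟩ := hf
    obtain ⟨g, rfl⟩ := hg
    exact ⟨f * g, rfl⟩
  | inv _ _ hf =>
    obtain ⟨f, rfl⟩ := hf
    exact ⟨f⁻¹, rfl⟩

theorem weylGroup_le_stabilizer (hΦ : ∀ α ∈ Φ, ∀ β ∈ Φ, sAffFun α 0 β ∈ Φ) :
    WeylGroup Φ ≤ MulAction.stabilizer (Equiv.Perm V) Φ := by
  refine (Subgroup.closure_le _).2 ?_
  rintro _ ⟨α, hα, rfl⟩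
  refine MulAction.mem_stabilizer_set.2 fun β ↦ ⟨fun hβ ↦ ?_, hΦ α hα β⟩
  exact sAffFun_involutive α 0 β ▸ hΦ α hα _ hβ

theorem mapsTo_of_mem_weylGroup (hΦ : ∀ α ∈ Φ, ∀ β ∈ Φ, sAffFun α 0 β ∈ Φ)
    (hw : w ∈ WeylGroup Φ) : MapsTo w Φ Φ :=
  fun β ↦ (MulAction.mem_stabilizer_set.1 (weylGroup_le_stabilizer hΦ hw) β).2

end WeylGroup

theorem statement_14_general {Φ : Set V} (hΦ : ∀ α ∈ Φ, ∀ β ∈ Φ, sAffFun α 0 β ∈ Φ)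
    (a b c : ℝ) {w : Equiv.Perm V} (hw : w ∈ WeylGroup Φ) :
    MapsTo w (rescaledCorootLattice Φ a b c) (rescaledCorootLattice Φ a b c) := by
  have hwΦ : MapsTo w Φ Φ := mapsTo_of_mem_weylGroup hΦ hw
  obtain ⟨f, rfl⟩ := exists_linearIsometryEquiv_of_mem_weylGroup hw
  exact mapsTo_rescaledCorootLattice (f := f.toLinearIsometry) hwΦ a b c

theorem statement_14 (Φ : Set V) (hΦ : IsCrystRootSystem Φ) (hirr : IsIrreducibleRS Φ)
    (a b : ℝ) (hab : a < b)
    (hall : ∀ γ ∈ Φ, ⟪γ, γ⟫ = a ∨ ⟪γ, γ⟫ = b)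
    (hshort : ∃ γ ∈ Φ, ⟪γ, γ⟫ = a) (hlong : ∃ γ ∈ Φ, ⟪γ, γ⟫ = b)
    (w : Equiv.Perm V) (hw : w ∈ WeylGroup Φ) (lam : V)
    (hlam : lam ∈ Submodule.span ℤ
      (((fun γ => (b / a) • coroot γ) '' {γ ∈ Φ | ⟪γ, γ⟫ = b}) ∪
        (coroot '' {γ ∈ Φ | ⟪γ, γ⟫ = a}))) :
    w lam ∈ Submodule.span ℤ
      (((fun γ => (b / a) • coroot γ) '' {γ ∈ Φ | ⟪γ, γ⟫ = b}) ∪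
        (coroot '' {γ ∈ Φ | ⟪γ, γ⟫ = a})) :=
  statement_14_general hΦ.refl_mem a b (b / a) hw hlam

end
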